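/- For the bi-cubic complete intersection Calabi–Yau in ℙ²×ℙ², with nonzero triple intersection numbers d₁₂₂ = 3 and d₁₁₂ = 3, the image of the open positive quadrant {(t¹,t²) ∈ ℝ² : t¹ > 0, t² > 0} under the dual Kähler moduli map s(t¹,t²) = (3t²(2t¹ + t²), 3t¹(2t² + t¹)) is exactly the entire open positive quadrant {(s₁,s₂) ∈ ℝ² : s₁ > 0 and s₂ > 0}. -/

import Mathlib

/-!
The map is homogeneous of degree `2`, so a point `s` of the open quadrant is attained as soon as
its ray is. The image of `(1, r)` lies on the ray through `s` exactly when `r` is a root of a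
quadratic polynomial with positive leading and negative constant coefficient, and such a
polynomial has a positive root.
-/

theorem exists_pos_quadratic_eq_zero {a c : ℝ} (ha : 0 < a) (b : ℝ) (hc : c < 0) :
    ∃ x, 0 < x ∧ a * (x * x) + b * x + c = 0 := by
  have hb : b ^ 2 < discrim a b c := by
    rw [discrim]
    linarith [mul_neg_of_pos_of_neg ha hc]
  have hsq : discrim a b c = √(discrim a b c) * √(discrim a b c) :=
    (Real.mul_self_sqrt ((sq_nonneg b).trans hb.le)).symm
  refine ⟨(-b + √(discrim a b c)) / (2 * a), ?_,
    (quadratic_eq_zero_iff ha.ne' hsq _).mpr (Or.inl rfl)⟩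
  have hlt : b < √(discrim a b c) := Real.lt_sqrt_of_sq_lt hb
  exact div_pos (by linarith) (by linarith)

/-- The dual Kähler moduli `s_i = d_{ijk} t^j t^k` of a Calabi–Yau threefold with `h^{1,1} = 2`
whose only nonzero triple intersection numbers are `d₁₁₂ = p` and `d₁₂₂ = q`, up to symmetry.
The pair `(t.1, t.2)` stands for `(t¹, t²)`. -/
def dualKaehlerModuli (p q : ℝ) (t : ℝ × ℝ) : ℝ × ℝ :=
  (t.2 * (2 * p * t.1 + q * t.2), t.1 * (2 * q * t.2 + p * t.1))

theorem dualKaehlerModuli_smul (p q c : ℝ) (t : ℝ × ℝ) :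
    dualKaehlerModuli p q (c • t) = c ^ 2 • dualKaehlerModuli p q t := by
  ext <;> simp only [dualKaehlerModuli, Prod.smul_fst, Prod.smul_snd, smul_eq_mul] <;> ring

theorem mapsTo_dualKaehlerModuli {p q : ℝ} (hp : 0 < p) (hq : 0 < q) :
    Set.MapsTo (dualKaehlerModuli p q) {t | 0 < t.1 ∧ 0 < t.2} {s | 0 < s.1 ∧ 0 < s.2} := by
  rintro ⟨x, y⟩ ⟨hx : 0 < x, hy : 0 < y⟩
  constructor <;> dsimp only [dualKaehlerModuli] <;> positivity

theorem exists_pos_smul_dualKaehlerModuli_eq {p q : ℝ} (hp : 0 < p) (hq : 0 < q) {s : ℝ × ℝ}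
    (h₁ : 0 < s.1) (h₂ : 0 < s.2) :
    ∃ r c : ℝ, 0 < r ∧ 0 < c ∧ c • dualKaehlerModuli p q (1, r) = s := by
  -- Cross-multiplying `r (2 p + q r) : (2 q r + p) = s₁ : s₂` gives this quadratic in `r`.
  obtain ⟨r, hr, hroot⟩ :
      ∃ r, 0 < r ∧ s.2 * q * (r * r) + 2 * (s.2 * p - s.1 * q) * r + -(s.1 * p) = 0 :=
    exists_pos_quadratic_eq_zero (mul_pos h₂ hq) _ (neg_neg_of_pos (mul_pos h₁ hp))
  have hden : 0 < 2 * q * r + p := by positivity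
  refine ⟨r, s.2 / (2 * q * r + p), hr, div_pos h₂ hden, Prod.ext ?_ ?_⟩
  · calc s.2 / (2 * q * r + p) * (r * (2 * p * 1 + q * r))
        = s.2 * (r * (2 * p + q * r)) / (2 * q * r + p) := by ring
      _ = s.1 := (div_eq_iff hden.ne').mpr (by linarith)
  · calc s.2 / (2 * q * r + p) * (1 * (2 * q * r + p * 1))
        = s.2 / (2 * q * r + p) * (2 * q * r + p) := by ring
      _ = s.2 := div_mul_cancel₀ _ hden.ne'

theorem surjOn_dualKaehlerModuli {p q : ℝ} (hp : 0 < p) (hq : 0 < q) :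
    Set.SurjOn (dualKaehlerModuli p q) {t | 0 < t.1 ∧ 0 < t.2} {s | 0 < s.1 ∧ 0 < s.2} := by
  rintro s ⟨h₁, h₂⟩
  obtain ⟨r, c, hr, hc, hs⟩ := exists_pos_smul_dualKaehlerModuli_eq hp hq h₁ h₂
  have hsqrt : 0 < √c := Real.sqrt_pos.mpr hc
  refine ⟨√c • (1, r), ⟨mul_pos hsqrt one_pos, mul_pos hsqrt hr⟩, ?_⟩
  rw [dualKaehlerModuli_smul, Real.sq_sqrt hc.le, hs]

theorem dual_kaehler_cone_bicubic_general {p q : ℝ} (hp : 0 < p) (hq : 0 < q) :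
    dualKaehlerModuli p q '' {t | 0 < t.1 ∧ 0 < t.2} = {s | 0 < s.1 ∧ 0 < s.2} :=
  (surjOn_dualKaehlerModuli hp hq).image_eq_of_mapsTo (mapsTo_dualKaehlerModuli hp hq)

/-- For the bi-cubic complete intersection Calabi–Yau in ℙ²×ℙ² (with nonzero triple
intersection numbers `d₁₂₂ = 3`, `d₁₁₂ = 3`), the image of the open positive quadrant of
Kähler moduli `(t¹, t²)` under the dual Kähler moduli map
`s(t¹,t²) = (3 t² (2 t¹ + t²), 3 t¹ (2 t² + t¹))` is exactly the entire open positive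
quadrant. -/
theorem dual_kaehler_cone_bicubic :
    (fun t : ℝ × ℝ => (3 * t.2 * (2 * t.1 + t.2), 3 * t.1 * (2 * t.2 + t.1))) ''
        {t : ℝ × ℝ | 0 < t.1 ∧ 0 < t.2} =
      {s : ℝ × ℝ | 0 < s.1 ∧ 0 < s.2} := by
  convert dual_kaehler_cone_bicubic_general (p := 3) (q := 3) three_pos three_pos using 2
  ext <;> dsimp only [dualKaehlerModuli] <;> ring
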